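/- Let ‖·‖ be a strictly convex norm on ℝ². Then every map φ : ℝ² → ℝ² satisfying ‖φ(x) − φ(y)‖ = 1 whenever ‖x − y‖ = 1 is an affine isometry. -/

import Mathlib

/-- `N` is a norm on `ℝ²`. -/
structure IsNorm (N : ℝ × ℝ → ℝ) : Prop where
  add_le : ∀ x y : ℝ × ℝ, N (x + y) ≤ N x + N y
  smul_eq : ∀ (c : ℝ) (x : ℝ × ℝ), N (c • x) = |c| * N x
  eq_zero_of : ∀ x : ℝ × ℝ, N x = 0 → x = 0

/-- `N` is a URTC-norm: for every `a b` at `N`-distance `1`, there are exactly two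
points `x` with `N (a - x) = 1` and `N (b - x) = 1`. -/
def IsURTC (N : ℝ × ℝ → ℝ) : Prop :=
  ∀ a b : ℝ × ℝ, N (a - b) = 1 →
    {x : ℝ × ℝ | N (a - x) = 1 ∧ N (b - x) = 1}.encard = 2

/-!
In a strictly convex plane a segment of length `1` is the side of exactly two equilateral triangles,
so a map preserving unit distances sends the rhombus `c, c + u, c + v, c + u + v` made of two unit
triangles either to such a rhombus or to a figure in which the images of `c` and `c + u + v`
coincide. Rotating the unit triangle continuously produces a second rhombus at `c` whose far vertex
has distance `1` from `c + u + v`. If the first rhombus collapsed, the image of this second far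
vertex would have distance `1` from the image of `c`, whereas it either equals the image of `c` or
lies at the end of the long diagonal of a rhombus, which is longer than `1`.

Hence rhombi are preserved, and gluing rhombi shows that arithmetic progressions with unit step are
preserved. Scaling isosceles triangles with integer legs then shows that rational distances are
preserved. Two sides of rational length bound the third one, so the map does not increase distances;
comparison with points at integer distance shows that it does not decrease them either, and
isometries into strictly convex spaces are affine.
-/

open Metric Module Set

section UnitTriangle

variable {E F : Type*} [NormedAddCommGroup E] [NormedAddCommGroup F] {u v : E}

/-- The points `0`, `u`, `v` form an equilateral triangle with side length `1`. Unit triangles with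
an arbitrary vertex `c` are written as `c`, `c + u`, `c + v`. -/
structure IsUnitTriangle (u v : E) : Prop where
  norm_left : ‖u‖ = 1
  norm_right : ‖v‖ = 1
  norm_sub : ‖v - u‖ = 1

theorem isUnitTriangle_iff : IsUnitTriangle u v ↔ ‖u‖ = 1 ∧ ‖v‖ = 1 ∧ ‖v - u‖ = 1 :=
  ⟨fun ⟨hu, hv, huv⟩ ↦ ⟨hu, hv, huv⟩, fun ⟨hu, hv, huv⟩ ↦ ⟨hu, hv, huv⟩⟩

theorem IsUnitTriangle.swap (h : IsUnitTriangle u v) : IsUnitTriangle v u :=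
  ⟨h.norm_right, h.norm_left, by rw [norm_sub_rev, h.norm_sub]⟩

theorem IsUnitTriangle.neg (h : IsUnitTriangle u v) : IsUnitTriangle (-u) (-v) :=
  ⟨by simp [h.norm_left], by simp [h.norm_right], by rw [neg_sub_neg, h.swap.norm_sub]⟩

theorem IsUnitTriangle.sub_right (h : IsUnitTriangle u v) : IsUnitTriangle u (u - v) :=
  ⟨h.norm_left, h.swap.norm_sub, by simp [h.norm_right]⟩

theorem IsUnitTriangle.left_ne_zero (h : IsUnitTriangle u v) : u ≠ 0 := by
  rintro rfl
  simpa using h.norm_left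

/-- The map `φ` preserves distance `1`, the hypothesis of Aleksandrov's problem. -/
def PreservesUnitDist (φ : E → F) : Prop :=
  ∀ x y, ‖x - y‖ = 1 → ‖φ x - φ y‖ = 1

theorem PreservesUnitDist.isUnitTriangle {φ : E → F} (hφ : PreservesUnitDist φ)
    (h : IsUnitTriangle u v) (c : E) : IsUnitTriangle (φ (c + u) - φ c) (φ (c + v) - φ c) where
  norm_left := hφ _ _ (by simpa using h.norm_left)
  norm_right := hφ _ _ (by simpa using h.norm_right)
  norm_sub := by
    rw [sub_sub_sub_cancel_right]
    exact hφ _ _ (by simpa using h.norm_sub)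

end UnitTriangle

section IsoscelesTriangle

variable {E : Type*} [NormedAddCommGroup E] [NormedSpace ℝ E] {u x y : E}

theorem exists_norm_eq_one_norm_smul_eq [Nontrivial E] (v : E) :
    ∃ u : E, ‖u‖ = 1 ∧ ‖v‖ • u = v := by
  rcases eq_or_ne v 0 with rfl | hv
  · obtain ⟨u, hu⟩ := exists_norm_eq E zero_le_one
    exact ⟨u, hu, by simp⟩
  · exact ⟨‖v‖⁻¹ • v, norm_smul_inv_norm (𝕜 := ℝ) hv, smul_inv_smul₀ (norm_ne_zero_iff.2 hv) v⟩

theorem exists_norm_sub_eq_norm_sub_eq (hE : 1 < Module.rank ℝ E) {r : ℝ}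
    (hxy : ‖x - y‖ ≤ 2 * r) : ∃ z, ‖x - z‖ = r ∧ ‖y - z‖ = r := by
  have := rank_pos_iff_nontrivial.1 (zero_lt_one.trans hE)
  have hr : 0 ≤ r := by linarith [norm_nonneg (x - y)]
  obtain ⟨u, hu, hxyu⟩ := exists_norm_eq_one_norm_smul_eq (x - y)
  have mem_sphere (t : ℝ) (ht : |t| = r) : t • u ∈ sphere (0 : E) r := by simp [norm_smul, hu, ht]
  have norm_add (t : ℝ) : ‖x - y + t • u‖ = |‖x - y‖ + t| := by
    conv_lhs => rw [← hxyu, ← add_smul, norm_smul, hu, mul_one, Real.norm_eq_abs]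
  obtain ⟨w, hw, hxyw⟩ := (isPreconnected_sphere hE 0 r).intermediate_value
    (mem_sphere (-r) (by simp [abs_of_nonneg hr])) (mem_sphere r (abs_of_nonneg hr))
    (f := fun w ↦ ‖x - y + w‖) (by fun_prop) (show r ∈ Icc _ _ by
      simp only [norm_add]
      exact ⟨abs_le.2 ⟨by linarith [norm_nonneg (x - y)], by linarith⟩,
        le_abs.2 (.inl (by linarith [norm_nonneg (x - y)]))⟩)
  refine ⟨x + w, by simpa using hw, ?_⟩
  rw [← hxyw, ← norm_neg]
  congr 1
  abel

theorem exists_isUnitTriangle (hE : 1 < Module.rank ℝ E) (hu : ‖u‖ = 1) :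
    ∃ v, IsUnitTriangle u v := by
  obtain ⟨v, hv, huv⟩ := exists_norm_sub_eq_norm_sub_eq hE (x := 0) (y := u) (r := 1) (by simp [hu])
  exact ⟨v, hu, by simpa using hv, by rwa [norm_sub_rev]⟩

end IsoscelesTriangle

section Plane

variable {E : Type*} [NormedAddCommGroup E] [NormedSpace ℝ E] {u v w : E}

theorem IsUnitTriangle.linearIndependent (h : IsUnitTriangle u v) :
    LinearIndependent ℝ ![u, v] := by
  refine (LinearIndependent.pair_iff' h.left_ne_zero).2 fun a ↦ ?_
  rintro rfl
  have ha : |a| = 1 := by simpa [norm_smul, h.norm_left] using h.norm_right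
  have ha' : |a - 1| = 1 := by
    simpa [show a • u - u = (a - 1) • u by module, norm_smul, h.norm_left] using h.norm_sub
  rcases eq_or_eq_neg_of_abs_eq ha with rfl | rfl <;> norm_num at ha'

theorem IsUnitTriangle.one_lt_norm_add [StrictConvexSpace ℝ E] (h : IsUnitTriangle u v) :
    1 < ‖u + v‖ := by
  by_contra! hle
  have := IsAddTorsionFree.of_isTorsionFree ℝ E
  have hne : u + v ≠ u - v := by
    rw [Ne, sub_eq_add_neg, add_right_inj, self_eq_neg]
    exact h.swap.left_ne_zero
  have hlt := norm_combo_lt_of_ne hle h.swap.norm_sub.le hne one_half_pos one_half_pos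
    (add_halves 1)
  rw [show (1 / 2 : ℝ) • (u + v) + (1 / 2 : ℝ) • (u - v) = u by module, h.norm_left] at hlt
  exact hlt.false

/-- The ordered basis `u`, `v` of the plane given by a unit triangle `0`, `u`, `v`. -/
noncomputable def IsUnitTriangle.basis (h : IsUnitTriangle u v) (hE : finrank ℝ E = 2) :
    Basis (Fin 2) ℝ E :=
  basisOfLinearIndependentOfCardEqFinrank h.linearIndependent (by simp [hE])

theorem IsUnitTriangle.coe_basis (h : IsUnitTriangle u v) (hE : finrank ℝ E = 2) :
    ⇑(h.basis hE) = ![u, v] :=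
  coe_basisOfLinearIndependentOfCardEqFinrank _ _

theorem IsUnitTriangle.exists_eq_smul_add_smul (h : IsUnitTriangle u v) (hE : finrank ℝ E = 2)
    (w : E) : ∃ a b : ℝ, w = a • u + b • v :=
  ⟨_, _, by simpa [h.coe_basis, Fin.sum_univ_two] using ((h.basis hE).sum_repr w).symm⟩

theorem mem_Icc_of_norm_add_smul_le [StrictConvexSpace ℝ E] {r t : ℝ} (hu : u ≠ 0)
    (hw : ‖w‖ = r) (hwu : ‖w - u‖ = r) (ht : ‖w + t • u‖ ≤ r) : t ∈ Icc (-1) 0 := by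
  have hcol : Collinear ℝ {w - u, w + t • u, w} := by
    refine (collinear_iff_of_mem (p₀ := w) (by simp)).2 ⟨u, ?_⟩
    simp only [mem_insert_iff, mem_singleton_iff, forall_eq_or_imp, forall_eq, vadd_eq_add]
    exact ⟨⟨-1, by module⟩, ⟨t, by module⟩, ⟨0, by module⟩⟩
  obtain ⟨s, ⟨hs₀, hs₁⟩, hs⟩ := hcol.wbtw_of_dist_eq_of_dist_le (p := 0) (by simpa using hwu)
    (by simpa using ht) (by simpa using hw) (by simpa using hu)
  have hst : (s - 1) • u = t • u := by
    rw [← add_right_inj w, ← hs, AffineMap.lineMap_apply, vsub_eq_sub, vadd_eq_add]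
    module
  rw [← smul_left_injective ℝ hu hst]
  exact ⟨by linarith, by linarith⟩

-- All points of norm at most `1` on the line through `w` and `w - u` lie between these two points;
-- this applies to `b • v - u` and to `b • v + (1 - b) • u`.
theorem IsUnitTriangle.eq_of_eq_smul_add_smul_of_le_one [StrictConvexSpace ℝ E] {a b : ℝ}
    (hv : IsUnitTriangle u v) (hw : IsUnitTriangle u w) (hwab : w = a • u + b • v) (hb₀ : 0 ≤ b)
    (hb₁ : b ≤ 1) : w = v := by
  have convex_combo {p q : E} (hp : ‖p‖ = 1) (hq : ‖q‖ = 1) : ‖b • p + (1 - b) • q‖ ≤ 1 := by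
    simpa using convex_closedBall (0 : E) 1 (by simp [hp]) (by simp [hq]) hb₀ (sub_nonneg.2 hb₁)
      (add_sub_cancel b 1)
  have ha_nonpos : -1 ≤ -1 - a := by
    refine (mem_Icc_of_norm_add_smul_le hv.left_ne_zero hw.norm_right hw.norm_sub ?_).1
    convert convex_combo hv.norm_sub hv.neg.norm_left using 2
    rw [hwab]
    module
  have ha_ge : 1 - b - a ≤ 0 := by
    refine (mem_Icc_of_norm_add_smul_le hv.left_ne_zero hw.norm_right hw.norm_sub ?_).2
    convert convex_combo hv.norm_right hv.norm_left using 2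
    rw [hwab]
    module
  obtain rfl : a = 0 := by linarith
  obtain rfl : b = 1 := by linarith
  simpa using hwab

theorem IsUnitTriangle.eq_of_eq_smul_add_smul_of_pos [StrictConvexSpace ℝ E] {a b : ℝ}
    (hv : IsUnitTriangle u v) (hw : IsUnitTriangle u w) (hwab : w = a • u + b • v) (hb : 0 < b) :
    w = v := by
  rcases le_total b 1 with hb₁ | hb₁
  · exact hv.eq_of_eq_smul_add_smul_of_le_one hw hwab hb.le hb₁
  · have hvab : v = (-(b⁻¹ * a)) • u + b⁻¹ • w := by
      rw [hwab, smul_add, inv_smul_smul₀ hb.ne']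
      module
    exact (hw.eq_of_eq_smul_add_smul_of_le_one hv hvab (inv_nonneg.2 hb.le)
      (inv_le_one_of_one_le₀ hb₁)).symm

theorem IsUnitTriangle.eq_or_eq_sub [StrictConvexSpace ℝ E] (hE : finrank ℝ E = 2)
    (hv : IsUnitTriangle u v) (hw : IsUnitTriangle u w) : w = v ∨ w = u - v := by
  obtain ⟨a, b, hwab⟩ := hv.exists_eq_smul_add_smul hE w
  rcases lt_trichotomy b 0 with hb | rfl | hb
  · have huw : u - w = (1 - a) • u + (-b) • v := by
      rw [hwab]
      module
    right
    rw [← hv.eq_of_eq_smul_add_smul_of_pos hw.sub_right huw (neg_pos.2 hb), sub_sub_cancel]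
  · exact absurd (by simpa using hwab.symm)
      ((LinearIndependent.pair_iff' hw.left_ne_zero).1 hw.linearIndependent a)
  · exact .inl (hv.eq_of_eq_smul_add_smul_of_pos hw hwab hb)

end Plane

section Rotation

variable {E : Type*} [NormedAddCommGroup E] [NormedSpace ℝ E] {u v : E}

theorem basis_det_pair (b : Basis (Fin 2) ℝ E) (x y : E) :
    b.det ![x, y] = b.coord 0 x * b.coord 1 y - b.coord 0 y * b.coord 1 x := by
  simp [Basis.det_apply, Matrix.det_fin_two, Basis.toMatrix_apply]

theorem IsUnitTriangle.basis_det_ne_zero (h : IsUnitTriangle u v) (hE : finrank ℝ E = 2)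
    (b : Basis (Fin 2) ℝ E) : b.det ![u, v] ≠ 0 := by
  rw [← h.coe_basis hE]
  exact (b.isUnit_det (h.basis hE)).ne_zero

/-- The set of pairs `(p, q)` such that `0`, `p`, `q` is a unit triangle with the orientation of the
basis `b`. The determinant is only required to be nonnegative, which makes the set closed; it does
not vanish on unit triangles. -/
def orientedUnitTriangles (b : Basis (Fin 2) ℝ E) : Set (E × E) :=
  {p | IsUnitTriangle p.1 p.2 ∧ 0 ≤ b.det ![p.1, p.2]}

theorem isCompact_orientedUnitTriangles (b : Basis (Fin 2) ℝ E) :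
    IsCompact (orientedUnitTriangles b) := by
  have : FiniteDimensional ℝ E := b.finiteDimensional_of_finite
  have : ProperSpace E := FiniteDimensional.proper_real E
  have hcoord (i : Fin 2) : Continuous (b.coord i) := (b.coord i).continuous_of_finiteDimensional
  have hsubset : orientedUnitTriangles b ⊆ closedBall 0 1 ×ˢ closedBall 0 1 := fun p hp ↦ by
    simp [hp.1.norm_left, hp.1.norm_right]
  refine ((isCompact_closedBall _ _).prod (isCompact_closedBall _ _)).of_isClosed_subset ?_ hsubset
  simp only [orientedUnitTriangles, isUnitTriangle_iff, basis_det_pair, ofPred_and]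
  refine (((isClosed_eq ?_ ?_).inter ((isClosed_eq ?_ ?_).inter (isClosed_eq ?_ ?_))).inter
    (isClosed_le ?_ ?_)) <;> fun_prop

theorem injOn_fst_orientedUnitTriangles [StrictConvexSpace ℝ E] (b : Basis (Fin 2) ℝ E) :
    InjOn Prod.fst (orientedUnitTriangles b) := by
  rintro ⟨p, q⟩ ⟨hq, hpos⟩ ⟨p', q'⟩ ⟨hq', hpos'⟩ (rfl : p = p')
  dsimp only at hq hq' hpos hpos'
  have hE : finrank ℝ E = 2 := by simp [finrank_eq_card_basis b]
  rcases hq.eq_or_eq_sub hE hq' with rfl | rfl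
  · rfl
  · refine absurd (le_antisymm ?_ hpos) (hq.basis_det_ne_zero hE b)
    simp only [basis_det_pair, map_sub] at hpos' ⊢
    linarith

theorem image_fst_orientedUnitTriangles (b : Basis (Fin 2) ℝ E) :
    Prod.fst '' orientedUnitTriangles b = sphere 0 1 := by
  ext p
  simp only [mem_image, mem_sphere_zero_iff_norm, Prod.exists, exists_and_right, exists_eq_right]
  refine ⟨fun ⟨q, hq⟩ ↦ hq.1.norm_left, fun hp ↦ ?_⟩
  obtain ⟨q, hq⟩ := exists_isUnitTriangle (by simp [rank_eq_card_basis b]) hp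
  rcases le_total 0 (b.det ![p, q]) with hpos | hneg
  · exact ⟨q, hq, hpos⟩
  · refine ⟨p - q, hq.sub_right, ?_⟩
    simp only [basis_det_pair, map_sub] at hneg ⊢
    linarith

theorem isPreconnected_orientedUnitTriangles [StrictConvexSpace ℝ E] (b : Basis (Fin 2) ℝ E) :
    IsPreconnected (orientedUnitTriangles b) := by
  have := isCompact_iff_compactSpace.1 (isCompact_orientedUnitTriangles b)
  have hE : 1 < Module.rank ℝ E := by simp [rank_eq_card_basis b]
  have hclosed : IsClosedMap fun p : orientedUnitTriangles b ↦ p.1.1 :=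
    (continuous_fst.comp continuous_subtype_val).isClosedMap
  have hrange : sphere 0 1 ⊆ range fun p : orientedUnitTriangles b ↦ p.1.1 := by
    rw [← image_fst_orientedUnitTriangles b, image_eq_range]
  have hpre := (isPreconnected_sphere hE 0 1).preimage_of_isClosedMap
    (injOn_fst_orientedUnitTriangles b).injective hclosed hrange
  rw [(eq_univ_of_forall fun p ↦ by simp [p.2.1.norm_left] : _ ⁻¹' _ = univ)] at hpre
  exact isPreconnected_iff_preconnectedSpace.2 ⟨hpre⟩

theorem IsUnitTriangle.exists_norm_add_sub_add_eq_one [StrictConvexSpace ℝ E]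
    (h : IsUnitTriangle u v) (hE : finrank ℝ E = 2) :
    ∃ p q, IsUnitTriangle p q ∧ ‖p + q - (u + v)‖ = 1 := by
  set b := h.basis hE
  have hdet : b.det ![u, v] = 1 := by rw [← h.coe_basis hE, b.det_self]
  have huv : (u, v) ∈ orientedUnitTriangles b := ⟨h, by simp [hdet]⟩
  have hneg : (-u, -v) ∈ orientedUnitTriangles b := by
    refine ⟨h.neg, ?_⟩
    simpa [basis_det_pair] using huv.2
  have hfar : 1 ≤ ‖-u + -v - (u + v)‖ := by
    rw [show -u + -v - (u + v) = (-2 : ℝ) • (u + v) by module, norm_smul, norm_neg,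
      Real.norm_two]
    linarith [h.one_lt_norm_add]
  obtain ⟨⟨p, q⟩, hpq, hnorm⟩ := (isPreconnected_orientedUnitTriangles b).intermediate_value
    huv hneg (f := fun p ↦ ‖p.1 + p.2 - (u + v)‖) (by fun_prop) ⟨by simp, hfar⟩
  exact ⟨p, q, hpq.1, hnorm⟩

end Rotation

section Progression

variable {E F : Type*} [NormedAddCommGroup E] [AddCommGroup F] {φ : E → F} {u v : E}

/-- The map `φ` sends arithmetic progressions with step of norm `1` to arithmetic progressions. It
suffices to consider progressions with three terms. -/
def PreservesUnitProgressions (φ : E → F) : Prop :=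
  ∀ c u, ‖u‖ = 1 → φ (c + u + u) - φ (c + u) = φ (c + u) - φ c

theorem PreservesUnitProgressions.map_add_nsmul (hprog : PreservesUnitProgressions φ)
    (hu : ‖u‖ = 1) (c : E) (n : ℕ) : φ (c + n • u) = φ c + n • (φ (c + u) - φ c) := by
  induction n generalizing c with
  | zero => simp
  | succ n ih =>
    rw [succ_nsmul', ← add_assoc, ih, hprog c u hu, succ_nsmul']
    abel

theorem PreservesUnitProgressions.map_add_nsmul_of_norm_eq_natCast [NormedSpace ℝ E] [Nontrivial E]
    (hprog : PreservesUnitProgressions φ) {m : ℕ} (hv : ‖v‖ = m) (c : E) (n : ℕ) :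
    φ (c + n • v) = φ c + n • (φ (c + v) - φ c) := by
  obtain ⟨u, hu, rfl⟩ : ∃ u : E, ‖u‖ = 1 ∧ m • u = v := by
    simpa [hv, Nat.cast_smul_eq_nsmul] using exists_norm_eq_one_norm_smul_eq v
  rw [← mul_nsmul, hprog.map_add_nsmul hu, hprog.map_add_nsmul hu, add_sub_cancel_left, mul_nsmul]

end Progression

section Rhombus

variable {E F : Type*} [NormedAddCommGroup E] [NormedAddCommGroup F] [NormedSpace ℝ F]
  [StrictConvexSpace ℝ F] {φ : E → F} {u v : E}

theorem PreservesUnitDist.map_add_add_eq_or (hφ : PreservesUnitDist φ) (hF : finrank ℝ F = 2)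
    (h : IsUnitTriangle u v) (c : E) :
    φ (c + u + v) = φ c ∨ φ (c + u + v) = φ (c + u) + φ (c + v) - φ c := by
  have hfar := hφ.isUnitTriangle h.swap.sub_right.swap (c + u)
  have hbase := hφ.isUnitTriangle h.swap.sub_right.swap.sub_right (c + u)
  rw [add_add_sub_cancel] at hfar hbase
  rw [sub_sub_cancel_left, add_neg_cancel_right] at hbase
  refine (hbase.eq_or_eq_sub hF hfar).imp sub_left_injective.eq_iff.1 fun heq ↦ ?_
  rw [sub_sub_sub_cancel_right, sub_eq_iff_eq_add] at heq
  rw [heq]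
  abel

variable [NormedSpace ℝ E] [StrictConvexSpace ℝ E]

theorem PreservesUnitDist.map_add_add (hφ : PreservesUnitDist φ) (hE : finrank ℝ E = 2)
    (hF : finrank ℝ F = 2) (h : IsUnitTriangle u v) (c : E) :
    φ (c + u + v) = φ (c + u) + φ (c + v) - φ c := by
  refine (hφ.map_add_add_eq_or hF h c).resolve_left fun hcollapse ↦ ?_
  obtain ⟨p, q, hpq, hdist⟩ := h.exists_norm_add_sub_add_eq_one hE
  have hdist_map : ‖φ (c + p + q) - φ c‖ = 1 := by
    rw [← hcollapse]
    exact hφ _ _ (by rwa [add_assoc, add_assoc, add_sub_add_left_eq_sub])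
  rcases hφ.map_add_add_eq_or hF hpq c with heq | heq
  · simp [heq] at hdist_map
  · refine (hφ.isUnitTriangle hpq c).one_lt_norm_add.ne' ?_
    rw [← hdist_map, heq]
    congr 1
    abel

theorem PreservesUnitDist.preservesUnitProgressions (hφ : PreservesUnitDist φ)
    (hE : finrank ℝ E = 2) (hF : finrank ℝ F = 2) : PreservesUnitProgressions φ := by
  intro c u hu
  obtain ⟨v, h⟩ := exists_isUnitTriangle (one_lt_rank_of_one_lt_finrank (by omega)) hu
  have hlower := hφ.map_add_add hE hF h c
  have hupper := hφ.map_add_add hE hF h.sub_right (c + v)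
  rw [add_add_sub_cancel, add_right_comm c v u, show c + u + v + (u - v) = c + u + u by abel,
    hlower] at hupper
  rw [hupper]
  abel

end Rhombus

section Isometry

variable {E F : Type*} [NormedAddCommGroup E] [NormedSpace ℝ E] [NormedAddCommGroup F]
  [NormedSpace ℝ F] {φ : E → F} {x y : E} {m : ℕ}

theorem PreservesUnitDist.norm_map_sub_of_norm_eq_natCast [Nontrivial E]
    (hφ : PreservesUnitDist φ) (hprog : PreservesUnitProgressions φ) (hxy : ‖x - y‖ = m) :
    ‖φ x - φ y‖ = m := by
  obtain ⟨u, hu, hxyu⟩ := exists_norm_eq_one_norm_smul_eq (x - y)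
  obtain rfl : y + m • u = x := by
    rw [← Nat.cast_smul_eq_nsmul ℝ, ← hxy, hxyu, add_sub_cancel]
  rw [hprog.map_add_nsmul hu, add_sub_cancel_left, RCLike.norm_nsmul ℝ,
    hφ _ _ (by simpa using hu), nsmul_one]

-- The isosceles triangle with base `x`, `y` and legs of length `m` is scaled by `k` at its apex, so
-- that its base has length `m` as well.
theorem PreservesUnitDist.norm_map_sub_of_natCast_mul_norm_eq (hφ : PreservesUnitDist φ)
    (hprog : PreservesUnitProgressions φ) (hE : 1 < Module.rank ℝ E) {k : ℕ} (hk : k ≠ 0)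
    (hxy : k * ‖x - y‖ = m) : ‖φ x - φ y‖ = ‖x - y‖ := by
  have := rank_pos_iff_nontrivial.1 (zero_lt_one.trans hE)
  have hk₁ : (1 : ℝ) ≤ k := mod_cast Nat.one_le_iff_ne_zero.2 hk
  obtain ⟨z, hxz, hyz⟩ := exists_norm_sub_eq_norm_sub_eq hE (x := x) (y := y) (r := m)
    (by nlinarith [norm_nonneg (x - y)])
  have map_leg {p : E} (hp : ‖p - z‖ = m) : φ (z + k • (p - z)) = φ z + k • (φ p - φ z) := by
    rw [hprog.map_add_nsmul_of_norm_eq_natCast hp, add_sub_cancel]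
  have hbase : ‖φ (z + k • (x - z)) - φ (z + k • (y - z))‖ = m := by
    refine hφ.norm_map_sub_of_norm_eq_natCast hprog ?_
    rw [add_sub_add_left_eq_sub, ← nsmul_sub, sub_sub_sub_cancel_right, RCLike.norm_nsmul ℝ,
      nsmul_eq_mul, hxy]
  rw [map_leg hxz, map_leg hyz, add_sub_add_left_eq_sub, ← nsmul_sub, sub_sub_sub_cancel_right,
    RCLike.norm_nsmul ℝ, nsmul_eq_mul, ← hxy] at hbase
  exact mul_left_cancel₀ (by positivity) hbase

theorem PreservesUnitDist.norm_map_sub_le (hφ : PreservesUnitDist φ)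
    (hprog : PreservesUnitProgressions φ) (hE : 1 < Module.rank ℝ E) (x y : E) :
    ‖φ x - φ y‖ ≤ ‖x - y‖ := by
  refine le_of_forall_lt_rat_imp_le fun q hq ↦ ?_
  lift q to ℚ≥0 using mod_cast (norm_nonneg _).trans hq.le
  rw [Rat.cast_nnratCast] at hq ⊢
  obtain ⟨z, hxz, hyz⟩ := exists_norm_sub_eq_norm_sub_eq hE (x := x) (y := y) (r := q / 2)
    (by linarith)
  have norm_map_leg {p : E} (hp : ‖p - z‖ = q / 2) : ‖φ p - φ z‖ = q / 2 := by
    refine (hφ.norm_map_sub_of_natCast_mul_norm_eq hprog hE (k := 2 * q.den) (m := q.num)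
      (by simp) ?_).trans hp
    have hq_num : (q * q.den : ℝ) = q.num := mod_cast q.mul_den_eq_num
    rw [hp, ← hq_num]
    push_cast
    ring
  calc
    ‖φ x - φ y‖ ≤ ‖φ x - φ z‖ + ‖φ z - φ y‖ := norm_sub_le_norm_sub_add_norm_sub ..
    _ = q := by rw [norm_sub_rev (φ z), norm_map_leg hxz, norm_map_leg hyz, add_halves]

theorem PreservesUnitDist.norm_map_sub (hφ : PreservesUnitDist φ)
    (hprog : PreservesUnitProgressions φ) (hE : 1 < Module.rank ℝ E) (x y : E) :
    ‖φ x - φ y‖ = ‖x - y‖ := by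
  have := rank_pos_iff_nontrivial.1 (zero_lt_one.trans hE)
  refine (hφ.norm_map_sub_le hprog hE x y).antisymm ?_
  obtain ⟨u, hu, hxyu⟩ := exists_norm_eq_one_norm_smul_eq (x - y)
  obtain ⟨n, hn⟩ := exists_nat_ge ‖x - y‖
  obtain ⟨z, hz⟩ : ∃ z, x - z = (n : ℝ) • u := ⟨x - (n : ℝ) • u, sub_sub_cancel _ _⟩
  have hxz : ‖x - z‖ = n := by simp [hz, norm_smul, hu]
  have hyz : ‖y - z‖ = n - ‖x - y‖ := by
    rw [← sub_sub_sub_cancel_left z y x, hz]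
    nth_rw 1 [← hxyu]
    rw [← sub_smul, norm_smul, hu, mul_one, Real.norm_of_nonneg (sub_nonneg.2 hn)]
  linarith [hφ.norm_map_sub_of_norm_eq_natCast hprog hxz, hφ.norm_map_sub_le hprog hE y z,
    norm_sub_le_norm_sub_add_norm_sub (φ x) (φ y) (φ z)]

end Isometry

theorem aleksandrov_strictly_convex_general {E F : Type*} [NormedAddCommGroup E] [NormedSpace ℝ E]
    [StrictConvexSpace ℝ E] [NormedAddCommGroup F] [NormedSpace ℝ F] [StrictConvexSpace ℝ F]
    (hE : finrank ℝ E = 2) (hF : finrank ℝ F = 2) {φ : E → F}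
    (hφ : ∀ x y, ‖x - y‖ = 1 → ‖φ x - φ y‖ = 1) :
    (∀ x y, ‖φ x - φ y‖ = ‖x - y‖) ∧ ∃ (L : E →ₗ[ℝ] F) (t : F), ∀ x, φ x = L x + t := by
  have hprog := PreservesUnitDist.preservesUnitProgressions hφ hE hF
  have hnorm := PreservesUnitDist.norm_map_sub hφ hprog (one_lt_rank_of_one_lt_finrank (by omega))
  have hisom : Isometry φ := .of_dist_eq fun x y ↦ by simp only [dist_eq_norm, hnorm]
  let A := hisom.affineIsometryOfStrictConvexSpace.toAffineMap
  exact ⟨hnorm, A.linear, φ 0, congrFun A.decomp⟩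

section IsNorm

variable {N : ℝ × ℝ → ℝ}

theorem IsNorm.map_zero (hN : IsNorm N) : N 0 = 0 := by
  simpa using hN.smul_eq 0 0

theorem IsNorm.nonneg (hN : IsNorm N) (x : ℝ × ℝ) : 0 ≤ N x := by
  have hneg : N (-x) = N x := by simpa using hN.smul_eq (-1) x
  have hadd : N 0 ≤ N x + N (-x) := by simpa only [add_neg_cancel] using hN.add_le x (-x)
  linarith [hN.map_zero]

/-- The plane `ℝ²` with the norm `N`, as a type synonym of `ℝ × ℝ`, since the latter carries the
supremum norm. -/
def IsNorm.Plane (_ : IsNorm N) : Type :=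
  ℝ × ℝ

namespace IsNorm.Plane

variable (hN : IsNorm N)

instance : AddCommGroup hN.Plane :=
  inferInstanceAs (AddCommGroup (ℝ × ℝ))

noncomputable instance : Module ℝ hN.Plane :=
  inferInstanceAs (Module ℝ (ℝ × ℝ))

instance : Norm hN.Plane :=
  ⟨N⟩

theorem core : NormedSpace.Core ℝ hN.Plane where
  norm_nonneg := hN.nonneg
  norm_smul := hN.smul_eq
  norm_triangle := hN.add_le
  norm_eq_zero_iff x := ⟨hN.eq_zero_of x, fun hx ↦ hx ▸ hN.map_zero⟩

noncomputable instance : NormedAddCommGroup hN.Plane :=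
  .ofCore (core hN)

noncomputable instance : NormedSpace ℝ hN.Plane :=
  .ofCore (core hN)

theorem finrank_eq_two : finrank ℝ hN.Plane = 2 :=
  (finrank_prod (R := ℝ) (M := ℝ) (M' := ℝ)).trans (by simp)

theorem strictConvexSpace
    (hSC : ∀ x y : ℝ × ℝ, N x = 1 → N y = 1 → x ≠ y → N ((1 / 2 : ℝ) • (x + y)) < 1) :
    StrictConvexSpace ℝ hN.Plane :=
  .of_norm_add_ne_two fun x y hx hy hxy ↦ by
    have hlt : ‖(1 / 2 : ℝ) • (x + y)‖ < 1 := hSC x y hx hy hxy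
    rw [norm_smul, Real.norm_of_nonneg one_half_pos.le] at hlt
    linarith

end IsNorm.Plane

end IsNorm

/-- If `N` is a strictly convex norm on `ℝ²`, then every unit-distance preserving map
is an affine isometry. -/
theorem aleksandrov_strictly_convex (N : ℝ × ℝ → ℝ) (hN : IsNorm N)
    (hSC : ∀ x y : ℝ × ℝ, N x = 1 → N y = 1 → x ≠ y → N ((1 / 2 : ℝ) • (x + y)) < 1)
    (φ : ℝ × ℝ → ℝ × ℝ)
    (hφ : ∀ x y : ℝ × ℝ, N (x - y) = 1 → N (φ x - φ y) = 1) :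
    (∀ x y : ℝ × ℝ, N (φ x - φ y) = N (x - y)) ∧
      ∃ (L : (ℝ × ℝ) →ₗ[ℝ] (ℝ × ℝ)) (t : ℝ × ℝ), ∀ x : ℝ × ℝ, φ x = L x + t := by
  have := IsNorm.Plane.strictConvexSpace hN hSC
  exact aleksandrov_strictly_convex_general (IsNorm.Plane.finrank_eq_two hN)
    (IsNorm.Plane.finrank_eq_two hN) hφ
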